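/- arXiv:2303.01721 — 3 statements merged into one kernel-verified Lean document; each statement's English description precedes it below -/
import Mathlib

section
/- Let 𝒞 ⊆ ℤ_m^n be a linear (n, m^k, d) (𝕡,π)-code and let I be an ideal of 𝕡 with full count. Then 𝒞 is an I-perfect (𝕡,π)-code if and only if the dual code 𝒞^⊥ is an I^c-perfect code with respect to the dual pomset 𝕡̃ (with the same labeling π). -/
open scoped Classical

noncomputable section

/-- Lee weight of an element of `ZMod m`. -/
def leeWt (m : ℕ) (a : ZMod m) : ℕ := min a.val (m - a.val)

/-- Block Lee weight of the `i`-th block of `u`. -/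
def blockWt (m s : ℕ) (π : Fin s → ℕ) (u : ∀ i : Fin s, Fin (π i) → ZMod m)
    (i : Fin s) : ℕ :=
  Finset.univ.sup fun t => leeWt m (u i t)

/-- The `(𝕡,π)`-weight of `u`. -/
def pomsetWt (m s : ℕ) (P : PartialOrder (Fin s)) (π : Fin s → ℕ)
    (u : ∀ i : Fin s, Fin (π i) → ZMod m) : ℕ :=
  ∑ i : Fin s,
    if ∃ j, j ≠ i ∧ P.le i j ∧ 0 < blockWt m s π u j then m / 2
    else blockWt m s π u i

/-- The pomset block distance. -/
def pomsetDist (m s : ℕ) (P : PartialOrder (Fin s)) (π : Fin s → ℕ)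
    (u v : ∀ i : Fin s, Fin (π i) → ZMod m) : ℕ :=
  pomsetWt m s P π (u - v)

/-- An ideal of the pomset `𝕡`, given by its count function `I : [s] → {0,…,⌊m/2⌋}`. -/
def IsIdeal (m s : ℕ) (P : PartialOrder (Fin s)) (I : Fin s → ℕ) : Prop :=
  (∀ a, I a ≤ m / 2) ∧ ∀ a b, 0 < I a → P.le b a → b ≠ a → I b = m / 2

/-- An ideal has full count if every element of its root set has count `⌊m/2⌋`. -/
def FullCount (m : ℕ) {s : ℕ} (I : Fin s → ℕ) : Prop :=
  ∀ a, 0 < I a → I a = m / 2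

/-- The cardinality `|I|` of an ideal. -/
def idealCard {s : ℕ} (I : Fin s → ℕ) : ℕ := ∑ a, I a

/-- The cardinality `|I*|` of the root set of an ideal. -/
def rootCard {s : ℕ} (I : Fin s → ℕ) : ℕ :=
  (Finset.univ.filter fun a => 0 < I a).card

/-- `Σ_{i ∈ I*} k_i`. -/
def rootSum {s : ℕ} (π I : Fin s → ℕ) : ℕ :=
  ∑ a ∈ Finset.univ.filter (fun a => 0 < I a), π a

/-- The `I`-ball centered at `u`. -/
def ballI (m s : ℕ) (π : Fin s → ℕ) (I : Fin s → ℕ)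
    (u : ∀ i : Fin s, Fin (π i) → ZMod m) :
    Set (∀ i : Fin s, Fin (π i) → ZMod m) :=
  {v | ∀ i, blockWt m s π (u - v) i ≤ I i}

/-- `𝒞` is `I`-perfect: the `I`-balls centered at codewords are pairwise
disjoint and cover the whole space. -/
def IPerfect (m s : ℕ) (π : Fin s → ℕ) (I : Fin s → ℕ)
    (C : Set (∀ i : Fin s, Fin (π i) → ZMod m)) : Prop :=
  (C.Pairwise fun c c' => Disjoint (ballI m s π I c) (ballI m s π I c')) ∧
  (⋃ c ∈ C, ballI m s π I c) = Set.univ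

/-- The `r`-ball centered at `u`. -/
def ballR (m s : ℕ) (P : PartialOrder (Fin s)) (π : Fin s → ℕ) (r : ℕ)
    (u : ∀ i : Fin s, Fin (π i) → ZMod m) :
    Set (∀ i : Fin s, Fin (π i) → ZMod m) :=
  {v | pomsetDist m s P π u v ≤ r}

/-- The standard dot product on `ℤ_m^n`. -/
def dotProd (m s : ℕ) (π : Fin s → ℕ)
    (c v : ∀ i : Fin s, Fin (π i) → ZMod m) : ZMod m :=
  ∑ i, ∑ t, c i t * v i t

/-- The dual code `𝒞^⊥`. -/
def dualCode (m s : ℕ) (π : Fin s → ℕ)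
    (C : Set (∀ i : Fin s, Fin (π i) → ZMod m)) :
    Set (∀ i : Fin s, Fin (π i) → ZMod m) :=
  {v | ∀ c ∈ C, dotProd m s π c v = 0}

/-- The dual pomset, encoded by the opposite partial order. -/
def dualOrder (s : ℕ) (P : PartialOrder (Fin s)) : PartialOrder (Fin s) where
  le a b := P.le b a
  lt a b := P.lt b a
  le_refl a := P.le_refl a
  le_trans a b c h1 h2 := P.le_trans _ _ _ h2 h1
  lt_iff_le_not_ge a b := P.lt_iff_le_not_ge b a
  le_antisymm a b h1 h2 := (P.le_antisymm _ _ h1 h2).symm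

/-- The minimum `(𝕡,π)`-distance of a code. -/
def minDist (m s : ℕ) (P : PartialOrder (Fin s)) (π : Fin s → ℕ)
    (C : Set (∀ i : Fin s, Fin (π i) → ZMod m)) : ℕ :=
  sInf {r | ∃ c ∈ C, ∃ c' ∈ C, c ≠ c' ∧ r = pomsetWt m s P π (c - c')}

/-- `𝒞` is an MDS `(𝕡,π)`-code: it attains the Singleton bound
`n − ⌈log_m K⌉ ≥ max { Σ_{i∈I*} k_i : I ideal, |I*| = ⌊(d−1)/⌊m/2⌋⌋ }`. -/
def IsMDS (m s : ℕ) (P : PartialOrder (Fin s)) (π : Fin s → ℕ)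
    (C : Set (∀ i : Fin s, Fin (π i) → ZMod m)) : Prop :=
  (∀ I, IsIdeal m s P I →
      rootCard I = (minDist m s P π C - 1) / (m / 2) →
      rootSum π I ≤ (∑ i, π i) - Nat.clog m (Nat.card ↥C)) ∧
  (∃ I, IsIdeal m s P I ∧
      rootCard I = (minDist m s P π C - 1) / (m / 2) ∧
      rootSum π I = (∑ i, π i) - Nat.clog m (Nat.card ↥C))

/-- The chain pomset on `[s]`: the usual total order on `Fin s`. -/
def chainOrder (s : ℕ) : PartialOrder (Fin s) := inferInstance

/-!
When `I` has full count, `B_I` is the submodule `U` of vectors supported on the blocks of the root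
set `I*`, because a Lee weight never exceeds `⌊m/2⌋`. The `I`-balls are then the cosets of `U`, so
`𝒞` is `I`-perfect exactly when `ℤ_m^n = U ⊕ 𝒞`. Taking orthogonals with respect to a perfect
pairing preserves direct sum decompositions, and `U^⊥` consists of the vectors supported off `I*`,
that is, `U^⊥ = B_{I^c}`. The converse direction uses `𝒞^⊥⊥ = 𝒞`, which holds over `ℤ_m` since the
`ℤ_m`-valued functionals on a finite `ℤ_m`-module separate points.
-/

theorem const_tsub_indicator_const {α β : Type*} [AddCommMonoid β] [PartialOrder β]
    [CanonicallyOrderedAdd β] [Sub β] [OrderedSub β] (S : Set α) (b : β) :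
    (fun a => b - S.indicator (fun _ => b) a) = Sᶜ.indicator fun _ => b := by
  funext a
  by_cases ha : a ∈ S <;> simp [ha]

section Cosets

variable {R M : Type*} [Ring R] [AddCommGroup M] [Module R M] (U D : Submodule R M)

theorem pairwise_disjoint_cosets_iff_disjoint :
    ((D : Set M).Pairwise fun c c' => Disjoint {v | c - v ∈ U} {v | c' - v ∈ U}) ↔
      Disjoint U D := by
  rw [Submodule.disjoint_def]
  constructor
  · intro hpair x hxU hxD
    by_contra hx
    have h0x : (0 : M) ∈ {v | x - v ∈ U} := by simpa using hxU
    exact Set.disjoint_left.mp (hpair hxD D.zero_mem hx) h0x (by simp)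
  · intro hUD c hc c' hc' hne
    refine Set.disjoint_left.mpr fun v hv hv' => hne (sub_eq_zero.mp ?_)
    exact hUD _ (by simpa using U.sub_mem hv hv') (D.sub_mem hc hc')

theorem iUnion_cosets_eq_univ_iff_codisjoint :
    ⋃ c ∈ (D : Set M), {v | c - v ∈ U} = Set.univ ↔ Codisjoint U D := by
  rw [codisjoint_iff, Submodule.eq_top_iff', Set.eq_univ_iff_forall]
  refine forall_congr' fun x => ?_
  simp only [Set.mem_iUnion, Set.mem_ofPred_eq, SetLike.mem_coe, exists_prop]
  constructor
  · rintro ⟨c, hc, hcx⟩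
    exact Submodule.mem_sup.mpr ⟨x - c, sub_mem_comm_iff.mp hcx, c, hc, sub_add_cancel x c⟩
  · intro hx
    obtain ⟨u, hu, c, hc, rfl⟩ := Submodule.mem_sup.mp hx
    exact ⟨c, hc, by simpa using hu⟩

end Cosets

section Orthogonal

variable {R M N : Type*} [CommRing R] [AddCommGroup M] [Module R M] [AddCommGroup N] [Module R N]

theorem isCompl_orthogonalBilin (p : M →ₗ[R] N →ₗ[R] R) [p.IsPerfPair] {U W : Submodule R M}
    (h : IsCompl U W) : IsCompl (U.orthogonalBilin p) (W.orthogonalBilin p) := by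
  rw [isCompl_iff, Submodule.disjoint_def, codisjoint_iff, Submodule.eq_top_iff']
  constructor
  · intro y hyU hyW
    refine (LinearMap.IsPerfPair.bijective_right p).injective (LinearMap.ext fun x => ?_)
    obtain ⟨u, hu, w, hw, rfl⟩ := Submodule.mem_sup.mp (h.sup_eq_top ▸ Submodule.mem_top (x := x))
    simp [hyU u hu, hyW w hw]
  · intro y
    -- `z` represents the functional that agrees with `p · y` on `U` and vanishes on `W`.
    obtain ⟨z, hz⟩ := (LinearMap.IsPerfPair.bijective_right p).surjective
      (p.flip y ∘ₗ U.projection W h)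
    have hz_apply (x : M) : p x z = p (U.projection W h x) y := LinearMap.congr_fun hz x
    refine Submodule.mem_sup.mpr ⟨y - z, fun u hu => ?_, z, fun w hw => ?_, sub_add_cancel y z⟩
    · simp [hz_apply, Submodule.projection_apply_left h ⟨u, hu⟩]
    · simp [hz_apply, (Submodule.projection_apply_eq_zero_iff h).mpr hw]

end Orthogonal

section ZModDuality

variable {n : ℕ} {M N : Type*} [AddCommGroup M] [Module (ZMod n) M]
  [AddCommGroup N] [Module (ZMod n) N]

variable (n) in
theorem hasEnoughRootsOfUnity_multiplicative_zmod :
    HasEnoughRootsOfUnity (Multiplicative (ZMod n)) n where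
  prim := ⟨Multiplicative.ofAdd 1, by
    rw [IsPrimitiveRoot.iff_orderOf, orderOf_ofAdd_eq_addOrderOf, ZMod.addOrderOf_one]⟩
  cyc :=
    have : IsCyclic (Multiplicative (ZMod n))ˣ :=
      (toUnits (G := Multiplicative (ZMod n))).isCyclic.mp inferInstance
    inferInstance

variable (n M) in
theorem exponent_multiplicative_dvd_of_module_zmod :
    Monoid.exponent (Multiplicative M) ∣ n := by
  refine Monoid.exponent_dvd_of_forall_pow_eq_one fun g => ?_
  rw [← ofAdd_toAdd g, ← ofAdd_nsmul, ← Nat.cast_smul_eq_nsmul (ZMod n), ZMod.natCast_self,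
    zero_smul, ofAdd_zero]

-- A `ℤ_n`-valued functional is a character of `M` with values in the `n`-th roots of unity of
-- `Multiplicative (ZMod n)`, so duality of finite abelian groups applies.
theorem exists_linearMap_zmod_apply_ne_zero [NeZero n] [Finite M] {x : M} (hx : x ≠ 0) :
    ∃ f : M →ₗ[ZMod n] ZMod n, f x ≠ 0 := by
  have := hasEnoughRootsOfUnity_multiplicative_zmod n
  have := HasEnoughRootsOfUnity.of_dvd (Multiplicative (ZMod n))
    (exponent_multiplicative_dvd_of_module_zmod n M)
  obtain ⟨χ, hχ⟩ := CommGroup.exists_apply_ne_one_of_hasEnoughRootsOfUnity (Multiplicative M)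
    (Multiplicative (ZMod n)) (a := Multiplicative.ofAdd x) hx
  let f : M →+ ZMod n := MonoidHom.toAdditive ((Units.coeHom _).comp χ)
  exact ⟨f.toZModLinearMap n, fun h => hχ (Units.ext h)⟩

variable [NeZero n] [Finite M] (p : M →ₗ[ZMod n] N →ₗ[ZMod n] ZMod n) [p.IsPerfPair]

theorem orthogonalBilin_flip_orthogonalBilin_zmod (C : Submodule (ZMod n) M) :
    (C.orthogonalBilin p).orthogonalBilin p.flip = C := by
  refine le_antisymm (fun x hx => ?_) fun x hx y hy => hy x hx
  by_contra hxC
  have : Finite (M ⧸ C) := Finite.of_surjective C.mkQ C.mkQ_surjective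
  obtain ⟨f, hf⟩ := exists_linearMap_zmod_apply_ne_zero (n := n) (x := C.mkQ x) (by simpa using hxC)
  obtain ⟨y, hy⟩ := (LinearMap.IsPerfPair.bijective_right p).surjective (f ∘ₗ C.mkQ)
  have hy_apply (z : M) : p z y = f (C.mkQ z) := LinearMap.congr_fun hy z
  have hyC : y ∈ C.orthogonalBilin p := fun c hc => by
    rw [hy_apply, C.mkQ_apply, (Submodule.Quotient.mk_eq_zero C).mpr hc, map_zero]
  exact hf (hy_apply x ▸ hx y hyC)

theorem isCompl_orthogonalBilin_zmod_iff {U W : Submodule (ZMod n) M} :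
    IsCompl (U.orthogonalBilin p) (W.orthogonalBilin p) ↔ IsCompl U W := by
  refine ⟨fun h => ?_, isCompl_orthogonalBilin p⟩
  simpa only [orthogonalBilin_flip_orthogonalBilin_zmod] using isCompl_orthogonalBilin p.flip h

end ZModDuality

section PiPairing

variable {R ι : Type*} [CommRing R] [Fintype ι] {M N : ι → Type*}
  [∀ i, AddCommGroup (M i)] [∀ i, Module R (M i)] [∀ i, AddCommGroup (N i)] [∀ i, Module R (N i)]

/-- The orthogonal direct sum of a finite family of pairings: `(x, y) ↦ ∑ i, p i (x i) (y i)`. -/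
def piPairing (p : ∀ i, M i →ₗ[R] N i →ₗ[R] R) : (∀ i, M i) →ₗ[R] (∀ i, N i) →ₗ[R] R :=
  ∑ i, (p i).compl₁₂ (LinearMap.proj i) (LinearMap.proj i)

variable (p : ∀ i, M i →ₗ[R] N i →ₗ[R] R)

theorem piPairing_apply (x : ∀ i, M i) (y : ∀ i, N i) :
    piPairing p x y = ∑ i, p i (x i) (y i) := by
  simp [piPairing]

theorem piPairing_single_left [DecidableEq ι] (i : ι) (a : M i) (y : ∀ i, N i) :
    piPairing p (Pi.single i a) y = p i a (y i) := by
  rw [piPairing_apply, Finset.sum_eq_single i]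
  · rw [Pi.single_eq_same]
  · intro j _ hj
    rw [Pi.single_eq_of_ne hj, map_zero, LinearMap.zero_apply]
  · simp

theorem flip_piPairing : (piPairing p).flip = piPairing fun i => (p i).flip := by
  ext
  simp [piPairing_apply]

theorem bijective_piPairing (hp : ∀ i, Function.Bijective (p i)) :
    Function.Bijective (piPairing p) := by
  have h_eq : ⇑(piPairing p) = LinearMap.lsum R N R ∘ Pi.map fun i => ⇑(p i) := by
    funext x
    ext
    simp [piPairing_apply]
  rw [h_eq]
  exact (LinearEquiv.bijective _).comp (Function.Bijective.piMap hp)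

instance isPerfPair_piPairing [∀ i, (p i).IsPerfPair] : (piPairing p).IsPerfPair where
  bijective_left := bijective_piPairing p fun i => LinearMap.IsPerfPair.bijective_left (p i)
  bijective_right := flip_piPairing p ▸
    bijective_piPairing _ fun i => LinearMap.IsPerfPair.bijective_right (p i)

theorem orthogonalBilin_piPairing_pi_bot [∀ i, (p i).IsPerfPair] (S : Set ι) :
    (Submodule.pi S fun _ => ⊥).orthogonalBilin (piPairing p) = Submodule.pi Sᶜ fun _ => ⊥ := by
  ext y
  simp only [Submodule.mem_orthogonalBilin_iff, Submodule.mem_pi, Submodule.mem_bot]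
  constructor
  · intro hy i hi
    refine (LinearMap.IsPerfPair.bijective_right (p i)).injective (LinearMap.ext fun a => ?_)
    have h_single : ∀ j ∈ S, (Pi.single i a : ∀ i, M i) j = 0 := fun j hj =>
      Pi.single_eq_of_ne (ne_of_mem_of_not_mem hj hi) a
    simpa [piPairing_single_left] using hy _ h_single
  · intro hy x hx
    rw [piPairing_apply]
    refine Finset.sum_eq_zero fun i _ => ?_
    by_cases hi : i ∈ S
    · rw [hx i hi, map_zero, LinearMap.zero_apply]
    · rw [hy i hi, map_zero]

end PiPairing

section LeeWeight

variable {m s : ℕ} {π : Fin s → ℕ}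

theorem leeWt_le_half (a : ZMod m) : leeWt m a ≤ m / 2 := by
  unfold leeWt
  omega

theorem leeWt_eq_zero_iff [NeZero m] {a : ZMod m} : leeWt m a = 0 ↔ a = 0 := by
  have := a.val_lt
  rw [← ZMod.val_eq_zero]
  unfold leeWt
  omega

theorem blockWt_le_half (u : ∀ i, Fin (π i) → ZMod m) (i : Fin s) : blockWt m s π u i ≤ m / 2 :=
  Finset.sup_le fun _ _ => leeWt_le_half _

theorem blockWt_eq_zero_iff [NeZero m] {u : ∀ i, Fin (π i) → ZMod m} {i : Fin s} :
    blockWt m s π u i = 0 ↔ u i = 0 := by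
  rw [blockWt, ← bot_eq_zero, Finset.sup_eq_bot_iff, funext_iff]
  simp [leeWt_eq_zero_iff]

theorem ballI_indicator [NeZero m] (S : Set (Fin s)) (u : ∀ i, Fin (π i) → ZMod m) :
    ballI m s π (S.indicator fun _ => m / 2) u =
      {v | u - v ∈ Submodule.pi (R := ZMod m) Sᶜ fun _ => ⊥} := by
  ext v
  refine forall_congr' fun i => ?_
  by_cases hi : i ∈ S
  · simp [hi, blockWt_le_half]
  · simp [hi, blockWt_eq_zero_iff]

theorem iPerfect_indicator_iff_isCompl [NeZero m] (S : Set (Fin s))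
    (D : Submodule (ZMod m) (∀ i, Fin (π i) → ZMod m)) :
    IPerfect m s π (S.indicator fun _ => m / 2) D ↔ IsCompl (Submodule.pi Sᶜ fun _ => ⊥) D := by
  simp only [IPerfect, ballI_indicator, pairwise_disjoint_cosets_iff_disjoint,
    iUnion_cosets_eq_univ_iff_codisjoint, isCompl_iff]

theorem FullCount.exists_eq_indicator {I : Fin s → ℕ} (hI : FullCount m I) :
    ∃ S : Set (Fin s), I = S.indicator fun _ => m / 2 := by
  refine ⟨{a | 0 < I a}, funext fun a => ?_⟩
  rcases Nat.eq_zero_or_pos (I a) with ha | ha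
  · simp [ha]
  · rw [hI a ha, Set.indicator_of_mem]
    exact ha

end LeeWeight

section DualCode

instance isPerfPair_dotProductBilin {R κ : Type*} [CommRing R] [Fintype κ] :
    (dotProductBilin R R : (κ → R) →ₗ[R] (κ → R) →ₗ[R] R).IsPerfPair :=
  .of_bijective _ (dotProductEquiv R κ).bijective

variable {m s : ℕ} {π : Fin s → ℕ}

variable (m π) in
/-- The standard dot product on `ℤ_m^n`, assembled from the dot products of the blocks so that it
is a perfect pairing by instance search. -/
abbrev blockDotForm : LinearMap.BilinForm (ZMod m) (∀ i, Fin (π i) → ZMod m) :=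
  piPairing fun _ => dotProductBilin (ZMod m) (ZMod m)

theorem dualCode_eq_orthogonalBilin (C : Submodule (ZMod m) (∀ i, Fin (π i) → ZMod m)) :
    dualCode m s π C = C.orthogonalBilin (blockDotForm m π) := by
  ext v
  simp [dualCode, dotProd, piPairing_apply, dotProduct]

theorem iPerfect_indicator_compl_dualCode_iff [NeZero m] (S : Set (Fin s))
    (C : Submodule (ZMod m) (∀ i, Fin (π i) → ZMod m)) :
    IPerfect m s π (Sᶜ.indicator fun _ => m / 2) (dualCode m s π C) ↔
      IPerfect m s π (S.indicator fun _ => m / 2) C := by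
  rw [dualCode_eq_orthogonalBilin, iPerfect_indicator_iff_isCompl, iPerfect_indicator_iff_isCompl,
    ← orthogonalBilin_piPairing_pi_bot fun _ => dotProductBilin (ZMod m) (ZMod m),
    isCompl_orthogonalBilin_zmod_iff]

theorem I_perfect_duality_general [NeZero m]
    (C : Submodule (ZMod m) (∀ i : Fin s, Fin (π i) → ZMod m))
    {I : Fin s → ℕ} (hI : FullCount m I) :
    IPerfect m s π I C ↔ IPerfect m s π (fun a => m / 2 - I a) (dualCode m s π C) := by
  obtain ⟨S, rfl⟩ := hI.exists_eq_indicator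
  rw [const_tsub_indicator_const, iPerfect_indicator_compl_dualCode_iff]

end DualCode

/-- `𝒞` is `I`-perfect iff `𝒞^⊥` is `I^c`-perfect w.r.t. the dual pomset. -/
theorem I_perfect_duality
    (m s : ℕ) (hm : 4 ≤ m) (hs : 1 ≤ s)
    (P : PartialOrder (Fin s)) (π : Fin s → ℕ) (hπ : ∀ i, 0 < π i)
    (n k d : ℕ) (hn : n = ∑ i, π i)
    (C : Submodule (ZMod m) (∀ i : Fin s, Fin (π i) → ZMod m))
    (hcard : Nat.card ↥C = m ^ k)
    (hd : IsLeast {r | ∃ c ∈ (C : Set (∀ i : Fin s, Fin (π i) → ZMod m)),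
      ∃ c' ∈ (C : Set (∀ i : Fin s, Fin (π i) → ZMod m)), c ≠ c' ∧
        r = pomsetWt m s P π (c - c')} d)
    (I : Fin s → ℕ) (hI : IsIdeal m s P I) (hfull : FullCount m I) :
    IPerfect m s π I (C : Set (∀ i : Fin s, Fin (π i) → ZMod m)) ↔
      IPerfect m s π (fun a => m / 2 - I a)
        (dualCode m s π (C : Set (∀ i : Fin s, Fin (π i) → ZMod m))) := by
  have : NeZero m := ⟨by omega⟩
  exact I_perfect_duality_general C hfull

end
end

section
/- Let I be an ideal of 𝕡 and let I_p = {a ∈ I* : 0 < I(a) < l}. If m is not divisible by 2I(j)+1 for some j ∈ I_p, then no collection of I-balls partitions ℤ_m^n: there is no subset D ⊆ ℤ_m^n such that the balls {B_I(v) : v ∈ D} are pairwise disjoint and their union is ℤ_m^n. -/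
open scoped Classical

noncomputable section

/-!
The `I`-ball centred at `u` is the translate by `u` of a box whose sides are Lee balls, so the
`I`-balls centred at the points of `D` form a partition exactly when `D` and that box are
complements in the additive group. A tiling by a box induces, on each coordinate axis through the
origin, a tiling of that axis by the corresponding side. Hence the Lee ball of radius `I j` tiles
`ZMod m`, and its size `2 * I j + 1` divides `m`.
-/

section Tiling

open AddSubgroup Set
open scoped Pointwise

theorem isComplement_iff_pairwiseDisjoint_vadd {G : Type*} [AddGroup G] {S T : Set G} :
    IsComplement S T ↔ S.PairwiseDisjoint (· +ᵥ T) ∧ ⋃ g ∈ S, g +ᵥ T = univ := by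
  constructor
  · intro h
    exact ⟨h.pairwiseDisjoint_vadd, (iUnion_vadd_set S T).trans h.add_eq⟩
  · rintro ⟨hdisj, hcover⟩
    refine isComplement_iff_existsUnique_neg_add_mem.2 fun g ↦ ?_
    obtain ⟨x, hx, hgx⟩ := mem_iUnion₂.1 (hcover ▸ mem_univ g)
    refine ⟨⟨x, hx⟩, mem_vadd_set_iff_neg_vadd_mem.1 hgx, ?_⟩
    rintro ⟨y, hy⟩ hgy
    exact Subtype.ext <|
      hdisj.elim_set hy hx g (mem_vadd_set_iff_neg_vadd_mem.2 hgy) hgx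

theorem exists_isComplement_of_isComplement_pi {ι : Type*} {G : ι → Type*} [∀ i, AddGroup (G i)]
    {S : Set (∀ i, G i)} {T : ∀ i, Set (G i)} (h : IsComplement S (univ.pi T)) (i : ι) :
    ∃ R : Set (G i), IsComplement R (T i) := by
  -- The centres of the translates of the box that meet the `i`-th axis.
  let axisCentres : Set (∀ i, G i) := {x ∈ S | ∀ k ≠ i, -x k ∈ T k}
  have mem_translate (x : ∀ i, G i) (g : G i) :
      -x + Pi.single i g ∈ univ.pi T ↔ -x i + g ∈ T i ∧ ∀ k ≠ i, -x k ∈ T k := by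
    rw [mem_univ_pi]
    constructor
    · intro hx
      exact ⟨by simpa using hx i, fun k hk ↦ by simpa [hk] using hx k⟩
    · rintro ⟨hi, hne⟩ k
      obtain rfl | hk := eq_or_ne k i
      · simpa using hi
      · simpa [hk] using hne k hk
  refine ⟨(· i) '' axisCentres, isComplement_iff_existsUnique_neg_add_mem.2 fun g ↦ ?_⟩
  obtain ⟨⟨x, hxS⟩, hx, x_unique⟩ :=
    isComplement_iff_existsUnique_neg_add_mem.1 h (Pi.single i g)
  obtain ⟨hxi, hxne⟩ := (mem_translate x g).1 hx
  refine ⟨⟨x i, x, ⟨hxS, hxne⟩, rfl⟩, hxi, ?_⟩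
  rintro ⟨_, y, ⟨hyS, hyne⟩, rfl⟩ hyi
  have y_eq_x := x_unique ⟨y, hyS⟩ ((mem_translate y g).2 ⟨hyi, hyne⟩)
  exact Subtype.ext (congr_fun (congr_arg Subtype.val y_eq_x) i)

end Tiling

section LeeBall

theorem leeWt_eq_natAbs_valMinAbs {m : ℕ} [NeZero m] (a : ZMod m) :
    leeWt m a = a.valMinAbs.natAbs :=
  a.valMinAbs_natAbs_eq_min.symm

theorem leeWt_neg {m : ℕ} (a : ZMod m) : leeWt m (-a) = leeWt m a := by
  obtain rfl | _ := eq_zero_or_neZero m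
  · simp [leeWt]
  · simp [leeWt_eq_natAbs_valMinAbs]

/-- The ball of radius `r` around `0` in `ZMod m` for the Lee weight: a side of the box of which
every `I`-ball is a translate. -/
def leeBall (m r : ℕ) : Set (ZMod m) := {a | leeWt m a ≤ r}

theorem image_valMinAbs_leeBall {m r : ℕ} (hr : 2 * r < m) :
    ZMod.valMinAbs '' leeBall m r = Set.Icc (-r : ℤ) r := by
  have : NeZero m := ⟨by omega⟩
  ext k
  simp only [leeBall, leeWt_eq_natAbs_valMinAbs, Set.mem_image, Set.mem_ofPred_eq, Set.mem_Icc]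
  constructor
  · rintro ⟨a, ha, rfl⟩
    omega
  · rintro ⟨hk, hk'⟩
    have valMinAbs_k : (k : ZMod m).valMinAbs = k :=
      (ZMod.valMinAbs_spec _ k).2 ⟨rfl, by omega, by omega⟩
    exact ⟨k, by omega, valMinAbs_k⟩

theorem ncard_leeBall {m r : ℕ} (hr : 2 * r < m) : (leeBall m r).ncard = 2 * r + 1 := by
  rw [← Set.ncard_image_of_injective _ ZMod.injective_valMinAbs, image_valMinAbs_leeBall hr,
    ← Finset.coe_Icc, Set.ncard_coe_finset, Int.card_Icc]
  omega

end LeeBall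

section IBall

open scoped Pointwise

variable {m s : ℕ} {π I : Fin s → ℕ}

theorem ballI_eq_vadd_pi_leeBall (u : ∀ i : Fin s, Fin (π i) → ZMod m) :
    ballI m s π I u =
      u +ᵥ Set.univ.pi fun i ↦ Set.univ.pi fun _ : Fin (π i) ↦ leeBall m (I i) := by
  ext v
  have leeWt_sub (i : Fin s) (t : Fin (π i)) :
      leeWt m (u i t - v i t) = leeWt m (-u i t + v i t) := by
    rw [← leeWt_neg, neg_sub, sub_eq_neg_add]
  simp [ballI, blockWt, leeBall, Set.mem_vadd_set_iff_neg_vadd_mem, leeWt_sub]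

theorem iPerfect_iff_isComplement {D : Set (∀ i : Fin s, Fin (π i) → ZMod m)} :
    IPerfect m s π I D ↔
      AddSubgroup.IsComplement D
        (Set.univ.pi fun i ↦ Set.univ.pi fun _ : Fin (π i) ↦ leeBall m (I i)) := by
  simp only [IPerfect, ballI_eq_vadd_pi_leeBall, isComplement_iff_pairwiseDisjoint_vadd]
  rfl

theorem no_partition_of_I_balls_general {j : Fin s} (hπ : 0 < π j) (hj : 2 * I j < m)
    (hnd : ¬ (2 * I j + 1) ∣ m) :
    ¬ ∃ D : Set (∀ i : Fin s, Fin (π i) → ZMod m), IPerfect m s π I D := by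
  rintro ⟨D, hD⟩
  obtain ⟨E, hE⟩ := exists_isComplement_of_isComplement_pi (iPerfect_iff_isComplement.1 hD) j
  obtain ⟨R, hR⟩ := exists_isComplement_of_isComplement_pi hE ⟨0, hπ⟩
  have card_eq : Nat.card R * (2 * I j + 1) = m := by
    simpa [Nat.card_coe_set_eq, ncard_leeBall hj] using hR.card_mul_card
  exact hnd (Dvd.intro_left _ card_eq)

end IBall

/-- if `m` is not divisible by `2I(j)+1` for some `j ∈ I_p`, no
collection of `I`-balls partitions `ℤ_m^n`. -/
theorem no_partition_of_I_balls
    (m s : ℕ) (hm : 4 ≤ m) (hs : 1 ≤ s)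
    (P : PartialOrder (Fin s)) (π : Fin s → ℕ) (hπ : ∀ i, 0 < π i)
    (n : ℕ) (hn : n = ∑ i, π i)
    (I : Fin s → ℕ) (hI : IsIdeal m s P I)
    (j : Fin s) (hj1 : 0 < I j) (hj2 : I j < m / 2)
    (hnd : ¬ (2 * I j + 1) ∣ m) :
    ¬ ∃ D : Set (∀ i : Fin s, Fin (π i) → ZMod m),
      (D.Pairwise fun x y => Disjoint (ballI m s π I x) (ballI m s π I y)) ∧
      (⋃ x ∈ D, ballI m s π I x) = Set.univ := by
  exact no_partition_of_I_balls_general (hπ j) (by omega) hnd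

end
end

section
/- Suppose all blocks have the same dimension, k_1 = k_2 = … = k_s = t, and let 𝒞 ⊆ ℤ_m^n be a linear (n, m^k, d) (𝕡,π)-code with t dividing n − k. If 𝒞 is an (((n−k)/t)·l)-perfect (𝕡,π)-code, then 𝒞 is an MDS (𝕡,π)-code. -/
open scoped Classical

noncomputable section

/-!
Disjointness of the `r`-balls forces `d > r`, because every codeword `c'` lies in its own ball.
With `r = ql` and `q = (n-k)/t` this gives `⌊(d-1)/l⌋ ≥ q`. Conversely, deleting the blocks in the
root set of an ideal `I` with `|I*| l < d` is injective on the code, which is the Singleton bound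
`k + Σ_{i ∈ I*} k_i ≤ n`; an ideal with `q + 1` roots would violate it, so `⌊(d-1)/l⌋ = q`. As all
blocks have dimension `t`, every ideal with `q` roots then attains the bound.
-/

section Ideals

theorem exists_isLowerSet_card_eq {α : Type*} [Fintype α] [PartialOrder α] {j : ℕ}
    (hj : j ≤ Fintype.card α) : ∃ J : Finset α, IsLowerSet (J : Set α) ∧ J.card = j := by
  induction j with
  | zero => exact ⟨∅, by simp [isLowerSet_empty], rfl⟩
  | succ j ih =>
    obtain ⟨J, hJ, rfl⟩ := ih (by omega)
    obtain ⟨x, hx⟩ := Jᶜ.exists_minimal <| by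
      rw [← Finset.card_pos, Finset.card_compl]
      omega
    have hxJ : x ∉ J := Finset.mem_compl.1 hx.prop
    refine ⟨insert x J, fun a b hba ha => ?_, Finset.card_insert_of_notMem hxJ⟩
    simp only [Finset.coe_insert, Set.mem_insert_iff, Finset.mem_coe] at ha ⊢
    rcases ha with rfl | ha
    · by_cases hb : b ∈ J
      · exact Or.inr hb
      · exact Or.inl (hx.eq_of_le (Finset.mem_compl.2 hb) hba)
    · exact Or.inr (hJ hba ha)

theorem exists_isIdeal_rootCard_eq {m s : ℕ} (hm : 2 ≤ m) (P : PartialOrder (Fin s)) {j : ℕ}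
    (hj : j ≤ s) : ∃ I, IsIdeal m s P I ∧ rootCard I = j := by
  obtain ⟨J, hJ, rfl⟩ := exists_isLowerSet_card_eq (α := Fin s) (hj.trans_eq (by simp))
  have hl : 0 < m / 2 := by omega
  have pos_iff (a : Fin s) : 0 < (if a ∈ J then m / 2 else 0) ↔ a ∈ J := by
    split_ifs with ha <;> simp [ha, hl]
  refine ⟨fun a => if a ∈ J then m / 2 else 0, ⟨fun a => ?_, fun a b ha hba _ => ?_⟩, ?_⟩
  · dsimp only
    split_ifs <;> simp
  · exact if_pos (hJ hba ((pos_iff a).1 ha))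
  · simp [rootCard, pos_iff]

theorem rootSum_eq_rootCard_mul {s t : ℕ} {π : Fin s → ℕ} (ht : ∀ i, π i = t) (I : Fin s → ℕ) :
    rootSum π I = rootCard I * t := by
  simp [rootSum, rootCard, ht]

end Ideals

section Weight

variable {m s : ℕ} {P : PartialOrder (Fin s)} {π : Fin s → ℕ}

theorem blockWt_le (u : ∀ i : Fin s, Fin (π i) → ZMod m) (i : Fin s) :
    blockWt m s π u i ≤ m / 2 :=
  Finset.sup_le fun t _ => by
    unfold leeWt
    omega

theorem blockWt_eq_zero_of_eq_zero {u : ∀ i : Fin s, Fin (π i) → ZMod m} {i : Fin s}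
    (h : u i = 0) : blockWt m s π u i = 0 := by
  simp [blockWt, leeWt, h]

theorem pomsetDist_self (u : ∀ i : Fin s, Fin (π i) → ZMod m) : pomsetDist m s P π u u = 0 := by
  simp [pomsetDist, pomsetWt, blockWt_eq_zero_of_eq_zero]

theorem pomsetWt_le_rootCard_mul {I : Fin s → ℕ} (hI : IsIdeal m s P I)
    {u : ∀ i : Fin s, Fin (π i) → ZMod m} (hu : ∀ i, I i = 0 → u i = 0) :
    pomsetWt m s P π u ≤ rootCard I * (m / 2) := by
  have root_of_blockWt_pos {j : Fin s} (hj : 0 < blockWt m s π u j) : 0 < I j :=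
    Nat.pos_of_ne_zero fun h0 => hj.ne' (blockWt_eq_zero_of_eq_zero (hu j h0))
  calc pomsetWt m s P π u ≤ ∑ i, if 0 < I i then m / 2 else 0 := by
        refine Finset.sum_le_sum fun i _ => ?_
        by_cases hi : 0 < I i
        · rw [if_pos hi]
          split_ifs
          exacts [le_rfl, blockWt_le u i]
        · rw [if_neg hi, if_neg]
          · exact (blockWt_eq_zero_of_eq_zero (hu i (Nat.eq_zero_of_not_pos hi))).le
          · rintro ⟨j, hji, hij, hj⟩
            have hIj := root_of_blockWt_pos hj
            have hIi : I i = m / 2 := hI.2 j i hIj hij hji.symm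
            exact hi (hIi ▸ hIj.trans_le (hI.1 j))
    _ = rootCard I * (m / 2) := by simp [← Finset.sum_filter, rootCard]

end Weight

section Distance

variable {m s : ℕ} {P : PartialOrder (Fin s)} {π : Fin s → ℕ}
  {C : Set (∀ i : Fin s, Fin (π i) → ZMod m)}

theorem minDist_le_pomsetDist {c c' : ∀ i : Fin s, Fin (π i) → ZMod m} (hc : c ∈ C) (hc' : c' ∈ C)
    (hne : c ≠ c') : minDist m s P π C ≤ pomsetDist m s P π c c' :=
  Nat.sInf_le ⟨c, hc, c', hc', hne, rfl⟩

theorem exists_pomsetDist_eq_minDist (P : PartialOrder (Fin s)) (hC : C.Nontrivial) :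
    ∃ c ∈ C, ∃ c' ∈ C, c ≠ c' ∧ minDist m s P π C = pomsetDist m s P π c c' :=
  let ⟨c, hc, c', hc', hne⟩ := hC
  Nat.sInf_mem (s := {r | ∃ c ∈ C, ∃ c' ∈ C, c ≠ c' ∧ r = pomsetWt m s P π (c - c')})
    ⟨_, c, hc, c', hc', hne, rfl⟩

theorem lt_minDist_of_pairwise_disjoint_ballR {r : ℕ} (hC : C.Nontrivial)
    (h : C.Pairwise fun c c' => Disjoint (ballR m s P π r c) (ballR m s P π r c')) :
    r < minDist m s P π C := by
  obtain ⟨c, hc, c', hc', hne, hd⟩ := exists_pomsetDist_eq_minDist P hC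
  by_contra! hle
  have mem_left : c' ∈ ballR m s P π r c := hd.symm.trans_le hle
  have mem_right : c' ∈ ballR m s P π r c' := (pomsetDist_self c').trans_le r.zero_le
  exact Set.disjoint_left.1 (h hc hc' hne) mem_left mem_right

end Distance

section SingletonBound

variable {m s : ℕ} [NeZero m] {P : PartialOrder (Fin s)} {π : Fin s → ℕ}
  {C : Set (∀ i : Fin s, Fin (π i) → ZMod m)}

theorem clog_card_le_sum_of_injOn_restrict {S : Finset (Fin s)} (h : C.InjOn S.restrict) :
    Nat.clog m (Nat.card C) ≤ ∑ i ∈ S, π i := by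
  refine Nat.clog_le_of_le_pow ?_
  calc Nat.card C ≤ Nat.card (∀ i : S, Fin (π i) → ZMod m) :=
        Nat.card_le_card_of_injective _ h.injective
    _ = m ^ ∑ i ∈ S, π i := by
        simp [Finset.prod_pow_eq_pow_sum, Finset.sum_attach]

theorem clog_card_le_sum (C : Set (∀ i : Fin s, Fin (π i) → ZMod m)) :
    Nat.clog m (Nat.card C) ≤ ∑ i, π i :=
  clog_card_le_sum_of_injOn_restrict fun _ _ _ _ h =>
    funext fun i => congrFun h ⟨i, Finset.mem_univ i⟩

theorem clog_card_add_rootSum_le {I : Fin s → ℕ} (hI : IsIdeal m s P I)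
    (hlt : rootCard I * (m / 2) < minDist m s P π C) :
    Nat.clog m (Nat.card C) + rootSum π I ≤ ∑ i, π i := by
  have restrict_injOn : C.InjOn (Finset.univ.filter fun i => ¬0 < I i).restrict := by
    intro c hc c' hc' heq
    by_contra hne
    have agree : ∀ i, I i = 0 → (c - c') i = 0 := fun i hi =>
      sub_eq_zero.2 (congrFun heq ⟨i, by simp [hi]⟩)
    exact (hlt.trans_le (minDist_le_pomsetDist hc hc' hne)).not_ge
      (pomsetWt_le_rootCard_mul hI agree)
  calc Nat.clog m (Nat.card C) + rootSum π I
      ≤ (∑ i with ¬0 < I i, π i) + ∑ i with 0 < I i, π i :=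
        Nat.add_le_add_right (clog_card_le_sum_of_injOn_restrict restrict_injOn) _
    _ = ∑ i, π i := by rw [add_comm, Finset.sum_filter_add_sum_filter_not]

end SingletonBound

section ConstantBlocks

variable {m s t : ℕ} {P : PartialOrder (Fin s)} {π : Fin s → ℕ}
  {C : Set (∀ i : Fin s, Fin (π i) → ZMod m)}

theorem minDist_le_mul_of_lt_clog_card_add (hm : 2 ≤ m) (ht : ∀ i, π i = t) {j : ℕ} (hj : j ≤ s)
    (h : s * t < Nat.clog m (Nat.card C) + j * t) : minDist m s P π C ≤ j * (m / 2) := by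
  have : NeZero m := ⟨by omega⟩
  obtain ⟨I, hI, rfl⟩ := exists_isIdeal_rootCard_eq hm P hj
  by_contra! hlt
  have singleton_bound : Nat.clog m (Nat.card C) + rootCard I * t ≤ s * t := by
    simpa [rootSum_eq_rootCard_mul ht, ht] using clog_card_add_rootSum_le hI hlt
  exact h.not_ge singleton_bound

theorem isMDS_of_mul_lt_minDist (hm : 2 ≤ m) (ht : ∀ i, π i = t) (hC : C.Nontrivial)
    {q : ℕ} (hq : Nat.clog m (Nat.card C) + q * t = s * t)
    (hlt : q * (m / 2) < minDist m s P π C) : IsMDS m s P π C := by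
  have : NeZero m := ⟨by omega⟩
  have : Nontrivial C := Set.Nontrivial.coe_sort hC
  have hk : 0 < Nat.clog m (Nat.card C) := Nat.clog_pos hm Finite.one_lt_card
  have hqt : q * t < s * t := by omega
  have hqs : q < s := Nat.lt_of_mul_lt_mul_right hqt
  have ht0 : 0 < t := Nat.pos_of_mul_pos_left ((Nat.zero_le _).trans_lt hqt)
  have hle : minDist m s P π C ≤ (q + 1) * (m / 2) :=
    minDist_le_mul_of_lt_clog_card_add hm ht hqs (by rw [add_one_mul]; omega)
  have hdiv : (minDist m s P π C - 1) / (m / 2) = q :=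
    Nat.div_eq_of_lt_le (by omega) (by omega)
  have attains_bound (I : Fin s → ℕ) (hI : rootCard I = q) :
      rootSum π I = ∑ i, π i - Nat.clog m (Nat.card C) := by
    simp only [rootSum_eq_rootCard_mul ht, hI, ht, Fin.sum_const, smul_eq_mul]
    omega
  obtain ⟨I, hI, hIq⟩ := exists_isIdeal_rootCard_eq hm P hqs.le
  rw [IsMDS, hdiv]
  exact ⟨fun J _ hJq => (attains_bound J hJq).le, I, hI, hIq, attains_bound I hIq⟩

end ConstantBlocks

theorem r_perfect_implies_mds_general {m s t n k : ℕ} (hm : 2 ≤ m) {P : PartialOrder (Fin s)}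
    {π : Fin s → ℕ} (ht : ∀ i, π i = t) (hn : n = ∑ i, π i)
    {C : Set (∀ i : Fin s, Fin (π i) → ZMod m)} (hk : Nat.clog m (Nat.card C) = k)
    (htnk : t ∣ n - k) (hC : C.Nontrivial)
    (hdisj : C.Pairwise fun c c' => Disjoint (ballR m s P π ((n - k) / t * (m / 2)) c)
      (ballR m s P π ((n - k) / t * (m / 2)) c')) :
    IsMDS m s P π C := by
  have : NeZero m := ⟨by omega⟩
  have hkn : k ≤ n := hk ▸ hn ▸ clog_card_le_sum C
  refine isMDS_of_mul_lt_minDist hm ht hC ?_ (lt_minDist_of_pairwise_disjoint_ballR hC hdisj)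
  rw [hk, Nat.div_mul_cancel htnk, Nat.add_sub_cancel' hkn, hn]
  simp [ht]

/-- an `(((n−k)/t)·⌊m/2⌋)`-perfect linear code with all blocks of
dimension `t` is MDS. -/
theorem r_perfect_implies_mds
    (m s : ℕ) (hm : 4 ≤ m) (hs : 1 ≤ s)
    (P : PartialOrder (Fin s)) (π : Fin s → ℕ) (hπ : ∀ i, 0 < π i)
    (t : ℕ) (ht : ∀ i, π i = t)
    (n k d : ℕ) (hn : n = ∑ i, π i) (htnk : t ∣ (n - k))
    (C : Submodule (ZMod m) (∀ i : Fin s, Fin (π i) → ZMod m))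
    (hcard : Nat.card ↥C = m ^ k)
    (hd : IsLeast {r | ∃ c ∈ (C : Set (∀ i : Fin s, Fin (π i) → ZMod m)),
      ∃ c' ∈ (C : Set (∀ i : Fin s, Fin (π i) → ZMod m)), c ≠ c' ∧
        r = pomsetWt m s P π (c - c')} d)
    (hperf :
      ((C : Set (∀ i : Fin s, Fin (π i) → ZMod m)).Pairwise fun c c' =>
        Disjoint (ballR m s P π (((n - k) / t) * (m / 2)) c)
          (ballR m s P π (((n - k) / t) * (m / 2)) c')) ∧
      (⋃ c ∈ (C : Set (∀ i : Fin s, Fin (π i) → ZMod m)),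
        ballR m s P π (((n - k) / t) * (m / 2)) c) = Set.univ) :
    IsMDS m s P π (C : Set (∀ i : Fin s, Fin (π i) → ZMod m)) := by
  obtain ⟨c, hc, c', hc', hne, -⟩ := hd.1
  exact r_perfect_implies_mds_general (by omega) ht hn (hcard ▸ Nat.clog_pow m k (by omega)) htnk
    ⟨c, hc, c', hc', hne⟩ hperf.1

end
end
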